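/- Let c > 0 and let V : [0, ∞) → ℝ be continuous and nonnegative, differentiable on (0, ∞), and suppose V′(t) ≤ −c·√(V(t)) for all t > 0. Then V(t) = 0 for every t ≥ 2·√(V(0))/c. -/

import Mathlib

/-!
As long as `V` is positive, the inequality `V' ≤ -c V ^ α` with `α < 1` says that `V ^ (1 - α)` has
slope at most `-c (1 - α)`, so `V ^ (1 - α)` would become negative if `V` stayed positive beyond
time `V 0 ^ (1 - α) / (c (1 - α))`. A function that decreases wherever it is positive cannot
become positive again after a zero, so `V` is nonpositive from that time on.
The square root is the case `α = 1 / 2`.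
-/

open Set

section Decay

variable {f f' : ℝ → ℝ} {a b : ℝ}

theorem pos_on_Icc_of_pos_right_of_deriv_nonpos (hf : ContinuousOn f (Icc a b))
    (hderiv : ∀ x ∈ Ioo a b, 0 < f x → HasDerivAt f (f' x) x)
    (hf'_nonpos : ∀ x ∈ Ioo a b, 0 < f x → f' x ≤ 0) (hb : 0 < f b) :
    ∀ x ∈ Icc a b, 0 < f x := by
  by_contra! ⟨x, hx, hfx⟩
  have hcompact : IsCompact (Icc a b ∩ f ⁻¹' Iic 0) :=
    isCompact_Icc.of_isClosed_subset
      (hf.preimage_isClosed_of_isClosed isClosed_Icc isClosed_Iic) inter_subset_left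
  obtain ⟨s, ⟨hs, hfs⟩, hs_last⟩ := hcompact.exists_isGreatest ⟨x, hx, hfx⟩
  have hsub : Ioo s b ⊆ Ioo a b := Ioo_subset_Ioo_left hs.1
  have hpos : ∀ y ∈ Ioo s b, 0 < f y := fun y hy ↦ by
    by_contra! hfy
    exact (hs_last ⟨Ioo_subset_Icc_self (hsub hy), hfy⟩).not_gt hy.1
  have hanti : AntitoneOn f (Icc s b) := by
    refine antitoneOn_of_hasDerivWithinAt_nonpos (f' := f') (convex_Icc s b)
      (hf.mono (Icc_subset_Icc_left hs.1)) ?_ ?_ <;> rw [interior_Icc]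
    · exact fun y hy ↦ (hderiv y (hsub hy) (hpos y hy)).hasDerivWithinAt
    · exact fun y hy ↦ hf'_nonpos y (hsub hy) (hpos y hy)
  have hle : f b ≤ f s := hanti (left_mem_Icc.2 hs.2) (right_mem_Icc.2 hs.2) hs.2
  exact (hle.trans hfs).not_gt hb

theorem rpow_one_sub_le_sub_mul_of_deriv_le {c α : ℝ} (hα : α ≤ 1) (hab : a ≤ b)
    (hf : ContinuousOn f (Icc a b)) (hpos : ∀ x ∈ Icc a b, 0 < f x)
    (hderiv : ∀ x ∈ Ioo a b, HasDerivAt f (f' x) x)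
    (hf'_le : ∀ x ∈ Ioo a b, f' x ≤ -c * f x ^ α) :
    f b ^ (1 - α) ≤ f a ^ (1 - α) - c * (1 - α) * (b - a) := by
  have hcont : ContinuousOn (fun x ↦ f x ^ (1 - α)) (Icc a b) :=
    hf.rpow_const fun x hx ↦ .inl (hpos x hx).ne'
  have hpow_deriv : ∀ x ∈ Ioo a b,
      HasDerivAt (fun x ↦ f x ^ (1 - α)) (f' x * (1 - α) * f x ^ (-α)) x := fun x hx ↦ by
    have h := (hderiv x hx).rpow_const (p := 1 - α) (.inl (hpos x (Ioo_subset_Icc_self hx)).ne')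
    rwa [sub_sub_cancel_left] at h
  have hslope : ∀ x ∈ Ioo a b, f' x * (1 - α) * f x ^ (-α) ≤ -(c * (1 - α)) := fun x hx ↦ by
    have hfx : 0 < f x := hpos x (Ioo_subset_Icc_self hx)
    have : 0 ≤ 1 - α := sub_nonneg.2 hα
    calc f' x * (1 - α) * f x ^ (-α)
        ≤ -c * f x ^ α * (1 - α) * f x ^ (-α) := by gcongr; exact hf'_le x hx
      _ = -(c * (1 - α)) * (f x ^ α * f x ^ (-α)) := by ring
      _ = -(c * (1 - α)) := by rw [← Real.rpow_add hfx, add_neg_cancel, Real.rpow_zero, mul_one]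
  have hmean : f b ^ (1 - α) - f a ^ (1 - α) ≤ -(c * (1 - α)) * (b - a) := by
    refine (convex_Icc a b).image_sub_le_mul_sub_of_deriv_le hcont ?_ ?_ a (left_mem_Icc.2 hab) b
      (right_mem_Icc.2 hab) hab <;> rw [interior_Icc]
    · exact fun x hx ↦ (hpow_deriv x hx).differentiableAt.differentiableWithinAt
    · exact fun x hx ↦ (hpow_deriv x hx).deriv.trans_le (hslope x hx)
  linarith

end Decay

theorem stmt13_general {c α : ℝ} (hc : 0 < c) (hα : α < 1) {V V' : ℝ → ℝ}
    (hVcont : ContinuousOn V (Ici 0)) (hV0 : 0 ≤ V 0)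
    (hVderiv : ∀ t, 0 < t → 0 < V t → HasDerivAt V (V' t) t)
    (hV'_le : ∀ t, 0 < t → 0 < V t → V' t ≤ -c * V t ^ α) {t : ℝ}
    (ht : V 0 ^ (1 - α) / (c * (1 - α)) ≤ t) : V t ≤ 0 := by
  have hrate : 0 < c * (1 - α) := mul_pos hc (sub_pos.2 hα)
  have ht0 : 0 ≤ t := le_trans (by positivity) ht
  have hcont : ContinuousOn V (Icc 0 t) := hVcont.mono Icc_subset_Ici_self
  by_contra! hVt
  have hpos : ∀ s ∈ Icc 0 t, 0 < V s :=
    pos_on_Icc_of_pos_right_of_deriv_nonpos hcont (fun s hs ↦ hVderiv s hs.1)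
      (fun s hs hVs ↦ (hV'_le s hs.1 hVs).trans
        (mul_nonpos_of_nonpos_of_nonneg (neg_nonpos.2 hc.le) (by positivity))) hVt
  have hdecay : V t ^ (1 - α) ≤ V 0 ^ (1 - α) - c * (1 - α) * (t - 0) :=
    rpow_one_sub_le_sub_mul_of_deriv_le hα.le ht0 hcont hpos
      (fun s hs ↦ hVderiv s hs.1 (hpos s (Ioo_subset_Icc_self hs)))
      (fun s hs ↦ hV'_le s hs.1 (hpos s (Ioo_subset_Icc_self hs)))
  have hVt_pow : 0 < V t ^ (1 - α) := Real.rpow_pos_of_pos hVt _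
  rw [div_le_iff₀' hrate] at ht
  linarith

/-- Finite-time comparison lemma: a nonnegative continuous function on `[0, ∞)`,
differentiable on `(0, ∞)` and satisfying `V' ≤ −c √V` there, vanishes for all
`t ≥ 2 √(V(0)) / c`. -/
theorem stmt13 (c : ℝ) (hc : 0 < c) (V : ℝ → ℝ)
    (hVcont : ContinuousOn V (Set.Ici 0))
    (hVnonneg : ∀ t, 0 ≤ t → 0 ≤ V t)
    (hVdiff : ∀ t, 0 < t → DifferentiableAt ℝ V t)
    (hVderiv : ∀ t, 0 < t → deriv V t ≤ -c * Real.sqrt (V t)) :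
    ∀ t, 2 * Real.sqrt (V 0) / c ≤ t → V t = 0 := by
  intro t ht
  refine le_antisymm ?_ (hVnonneg t (le_trans (by positivity) ht))
  simp only [Real.sqrt_eq_rpow] at hVderiv ht
  exact stmt13_general hc one_half_lt_one hVcont (hVnonneg 0 le_rfl)
    (fun s hs _ ↦ (hVdiff s hs).hasDerivAt) (fun s hs _ ↦ hVderiv s hs)
    (by ring_nf at ht ⊢; exact ht)
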